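/- arXiv:2406.03270 — 5 statements merged into one kernel-verified Lean document; each statement's English description precedes it below -/
import Mathlib

section
/- For λ ∈ K, one has φ^c(λ) = 0 if and only if λ ∈ SOL(K, F), i.e., if and only if ⟨F(λ), ω − λ⟩ ≥ 0 for all ω ∈ K. -/
open Matrix

/-!
Taking `ω = l` shows that the regularized gap is nonnegative, and it vanishes at a solution because
there both terms of the objective are nonpositive. Conversely, moving from `l` a fraction `t` of
the way to `ω ∈ K` changes the linear term at order `t` but the quadratic one only at order `t ^ 2`,
so a vanishing gap forces the linear term to be nonpositive.
-/

section OrderedField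

variable {𝕜 : Type*} [Field 𝕜] [LinearOrder 𝕜] [IsStrictOrderedRing 𝕜]

theorem nonpos_of_forall_mul_le_sq_mul {a b : 𝕜}
    (h : ∀ t, 0 < t → t ≤ 1 → t * a ≤ t ^ 2 * b) : a ≤ 0 := by
  by_contra! ha
  have hab : 0 < a + |b| := add_pos_of_pos_of_nonneg ha (abs_nonneg b)
  set t := a / (a + |b|)
  have ht_pos : 0 < t := div_pos ha hab
  have ht_le_one : t ≤ 1 := (div_le_one hab).2 (le_add_of_nonneg_right (abs_nonneg b))
  have hle : a ≤ t * b :=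
    le_of_mul_le_mul_left (by linarith [h t ht_pos ht_le_one]) ht_pos
  have hlt : t * b < a := calc
    t * b ≤ t * |b| := mul_le_mul_of_nonneg_left (le_abs_self b) ht_pos.le
    _ < t * (a + |b|) := mul_lt_mul_of_pos_left (lt_add_of_pos_left _ ha) ht_pos
    _ = a := div_mul_cancel₀ a hab.ne'
  exact hle.not_gt hlt

end OrderedField

section Objective

variable {R E : Type*} [CommRing R] [AddCommGroup E] [Module R E]

/-- The objective `ω ↦ f (l - ω) - Q (l - ω)` whose supremum over the feasible set is the
regularized gap at `l`. Here `f` stands for the value at `l` of the operator of the variational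
inequality, seen as a linear form, and `Q` includes the factor `c / 2` of the regularization. -/
def regularizedGapObjective (f : Module.Dual R E) (Q : QuadraticForm R E) (l ω : E) : R :=
  f (l - ω) - Q (l - ω)

theorem regularizedGapObjective_self (f : Module.Dual R E) (Q : QuadraticForm R E) (l : E) :
    regularizedGapObjective f Q l l = 0 := by
  simp [regularizedGapObjective]

theorem regularizedGapObjective_add_smul_sub (f : Module.Dual R E) (Q : QuadraticForm R E)
    (l ω : E) (t : R) :
    regularizedGapObjective f Q l (l + t • (ω - l)) = t * f (l - ω) - t ^ 2 * Q (l - ω) := by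
  have hdiff : l - (l + t • (ω - l)) = t • (l - ω) := by module
  rw [regularizedGapObjective, hdiff, map_smul, QuadraticMap.map_smul, smul_eq_mul, smul_eq_mul, sq]

theorem regularizedGapObjective_dotProduct {n : Type*} [Fintype n] [DecidableEq n]
    (u : n → R) (r : R) (A : Matrix n n R) (l : n → R) :
    regularizedGapObjective (dotProductBilin R R u) (r • A.toQuadraticForm') l =
      fun ω => u ⬝ᵥ (l - ω) - r * ((l - ω) ⬝ᵥ A *ᵥ (l - ω)) := by
  ext ω
  simp [regularizedGapObjective, Matrix.toQuadraticForm', toLinearMap₂'_apply']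

theorem regularizedGapObjective_nonpos [PartialOrder R] [IsOrderedAddMonoid R]
    {f : Module.Dual R E} {Q : QuadraticForm R E} {l ω : E}
    (hQ : 0 ≤ Q (l - ω)) (hf : 0 ≤ f (ω - l)) : regularizedGapObjective f Q l ω ≤ 0 := by
  have hlin : f (l - ω) ≤ 0 := by rwa [← neg_sub, map_neg, neg_nonpos]
  exact sub_nonpos.2 (hlin.trans hQ)

end Objective

section VariationalInequality

variable {𝕜 E : Type*} [Field 𝕜] [LinearOrder 𝕜] [IsStrictOrderedRing 𝕜] [AddCommGroup E]
  [Module 𝕜 E] {K : Set E} {l : E} {f : Module.Dual 𝕜 E} {Q : QuadraticForm 𝕜 E}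

theorem nonneg_of_forall_regularizedGapObjective_nonpos (hK : StarConvex 𝕜 l K)
    (h : ∀ ω ∈ K, regularizedGapObjective f Q l ω ≤ 0) {ω : E} (hω : ω ∈ K) :
    0 ≤ f (ω - l) := by
  suffices hlin : f (l - ω) ≤ 0 by rwa [← neg_sub, map_neg, neg_nonneg]
  refine nonpos_of_forall_mul_le_sq_mul (b := Q (l - ω)) fun t ht_pos ht_le_one => ?_
  have hobj := h _ (hK.add_smul_sub_mem hω ht_pos.le ht_le_one)
  rwa [regularizedGapObjective_add_smul_sub, sub_nonpos] at hobj

theorem stmt_4_general (hK : StarConvex 𝕜 l K) (hl : l ∈ K) (hQ : ∀ v, 0 ≤ Q v) {m : 𝕜}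
    (hm : IsLUB (regularizedGapObjective f Q l '' K) m) :
    m = 0 ↔ ∀ ω ∈ K, 0 ≤ f (ω - l) := by
  constructor
  · rintro rfl ω hω
    have hobj : ∀ ω ∈ K, regularizedGapObjective f Q l ω ≤ 0 :=
      fun _ h => hm.1 (Set.mem_image_of_mem _ h)
    exact nonneg_of_forall_regularizedGapObjective_nonpos hK hobj hω
  · intro hsol
    refine le_antisymm (hm.2 ?_) (hm.1 ⟨l, hl, regularizedGapObjective_self f Q l⟩)
    rintro _ ⟨ω, hω, rfl⟩
    exact regularizedGapObjective_nonpos (hQ _) (hsol ω hω)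

end VariationalInequality

/-- For λ ∈ K, φ^c(λ) = 0 iff λ ∈ SOL(K, F), i.e., iff ⟨F(λ), ω − λ⟩ ≥ 0 for all ω ∈ K. -/
theorem stmt_4 (n : ℕ) (hn : 1 ≤ n) (K : Set (Fin n → ℝ))
    (hKne : K.Nonempty) (hKcl : IsClosed K) (hKcv : Convex ℝ K)
    (F : (Fin n → ℝ) → (Fin n → ℝ)) (hF : Continuous F)
    (c : ℝ) (hc : 0 < c) (A : Matrix (Fin n) (Fin n) ℝ) (hA : A.PosDef)
    (φ : (Fin n → ℝ) → ℝ)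
    (hφ : ∀ l, IsGreatest
      ((fun ω => F l ⬝ᵥ (l - ω) - c / 2 * ((l - ω) ⬝ᵥ A.mulVec (l - ω))) '' K) (φ l)) :
    ∀ l ∈ K, (φ l = 0 ↔ ∀ ω ∈ K, 0 ≤ F l ⬝ᵥ (ω - l)) := by
  intro l hl
  refine stmt_4_general (f := dotProductBilin ℝ ℝ (F l)) (hKcv.starConvex hl) hl
    (hA.toQuadraticForm'.smul (half_pos hc)).nonneg ?_
  exact regularizedGapObjective_dotProduct (F l) (c / 2) A l ▸ (hφ l).isLUB
end

section
/- If F is continuously differentiable, then the regularized gap function φ^c is differentiable at every λ ∈ ℝ^n, with gradient ∇φ^c(λ) = F(λ) + (DF(λ)ᵀ − cA)(λ − ω̂(λ)), where DF(λ) is the Jacobian matrix of F at λ and ω̂(λ) ∈ K is the unique maximizer over ω ∈ K of ⟨F(λ), λ − ω⟩ − (c/2)⟨λ − ω, A(λ − ω)⟩. -/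
open RealInnerProductSpace

/-!
Write `f x ω` for the objective being maximized and let `a` be the maximizer at `l`. Since `A` is
positive definite, `f l` is strongly concave on `K`, so `f l ω` falls below `f l a` by at least a
multiple of `‖ω - a‖ ^ 2`. On the other hand `ω ↦ f x ω - f l ω` is affine with slope
`-(G x - G l)`, where `G = F - c A`. Hence moving from `l` to `x` raises the supremum above `f x a`
by at most a quantity of the form `p * r - q * r ^ 2` with `p = ‖G x - G l‖` and `r = ‖ω - a‖`,
which is `O(‖G x - G l‖ ^ 2) = O(‖x - l‖ ^ 2)`. The gap function is therefore squeezed between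
`f · a` and `f · a + O(‖x - l‖ ^ 2)`, and has the same gradient at `l` as the smooth function
`f · a`.
-/

open Asymptotics Filter Topology

lemma add_modulus_le_of_isMaxOn_of_uniformConcaveOn {E : Type*} [NormedAddCommGroup E]
    [NormedSpace ℝ E] {s : Set E} {ψ : ℝ → ℝ} {f : E → ℝ} {a y : E}
    (hf : UniformConcaveOn s ψ f) (ha : a ∈ s) (hmax : IsMaxOn f s a) (hy : y ∈ s) :
    f y + ψ ‖a - y‖ ≤ f a := by
  have hsegment : ∀ t ∈ Set.Ioo (0 : ℝ) 1, f y + (1 - t) * ψ ‖a - y‖ ≤ f a := by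
    rintro t ⟨ht0, ht1⟩
    have hconcave := hf.2 ha hy (sub_nonneg.2 ht1.le) ht0.le (sub_add_cancel 1 t)
    have hle : f ((1 - t) • a + t • y) ≤ f a :=
      hmax (hf.1 ha hy (sub_nonneg.2 ht1.le) ht0.le (sub_add_cancel 1 t))
    simp only [smul_eq_mul] at hconcave
    refine le_of_mul_le_mul_left ?_ ht0
    linarith
  have hlim : Tendsto (fun t : ℝ => f y + (1 - t) * ψ ‖a - y‖) (𝓝[>] 0)
      (𝓝 (f y + (1 - 0) * ψ ‖a - y‖)) :=
    (by fun_prop : Continuous fun t : ℝ => f y + (1 - t) * ψ ‖a - y‖).continuousWithinAt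
  rw [sub_zero, one_mul] at hlim
  exact le_of_tendsto hlim (eventually_of_mem (Ioo_mem_nhdsGT one_pos) hsegment)

lemma exists_pos_mul_norm_pow_le {E : Type*} [NormedAddCommGroup E] [NormedSpace ℝ E]
    [ProperSpace E] {f : E → ℝ} {k : ℕ} (hk : k ≠ 0) (hf : Continuous f)
    (hsmul : ∀ t : ℝ, 0 ≤ t → ∀ x, f (t • x) = t ^ k * f x) (hpos : ∀ x, x ≠ 0 → 0 < f x) :
    ∃ m : ℝ, 0 < m ∧ ∀ x, m * ‖x‖ ^ k ≤ f x := by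
  obtain ⟨m, hm, hsphere⟩ : ∃ m, 0 < m ∧ ∀ u ∈ Metric.sphere (0 : E) 1, m ≤ f u :=
    (isCompact_sphere 0 1).exists_forall_le' hf.continuousOn
      fun u hu => hpos u (ne_zero_of_mem_unit_sphere ⟨u, hu⟩)
  refine ⟨m, hm, fun x => ?_⟩
  rcases eq_or_ne x 0 with rfl | hx
  · have hzero := hsmul 0 le_rfl 0
    rw [zero_smul, zero_pow hk, zero_mul] at hzero
    rw [norm_zero, zero_pow hk, mul_zero, hzero]
  · have hnorm : ‖x‖ ≠ 0 := norm_ne_zero_iff.2 hx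
    calc m * ‖x‖ ^ k ≤ f (‖x‖⁻¹ • x) * ‖x‖ ^ k := by
          gcongr
          exact hsphere _ (by simp [norm_smul, hnorm])
      _ = f x := by
          rw [mul_comm, ← hsmul _ (norm_nonneg x), smul_inv_smul₀ hnorm]

lemma exists_pos_mul_norm_sq_le_inner_toEuclideanLin {ι : Type*} [Fintype ι] [DecidableEq ι]
    {A : Matrix ι ι ℝ} (hA : A.PosDef) :
    ∃ m : ℝ, 0 < m ∧ ∀ x, m * ‖x‖ ^ 2 ≤ ⟪x, Matrix.toEuclideanLin A x⟫ := by
  have hcont : Continuous (Matrix.toEuclideanLin A) := LinearMap.continuous_of_finiteDimensional _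
  refine exists_pos_mul_norm_pow_le two_ne_zero (by fun_prop) (fun t _ x => ?_) (fun x hx => ?_)
  · rw [map_smul, real_inner_smul_left, real_inner_smul_right]
    ring
  · have hdot : ⟪x, Matrix.toEuclideanLin A x⟫ = star x.ofLp ⬝ᵥ A.mulVec x.ofLp := by
      rw [EuclideanSpace.inner_eq_star_dotProduct, dotProduct_comm]
      rfl
    rw [hdot]
    exact hA.dotProduct_mulVec_pos (by simpa using hx)

section GapObjective

variable {E : Type*} [NormedAddCommGroup E] [InnerProductSpace ℝ E]
  {K : Set E} {F : E → E} {c m : ℝ} {T : E →ₗ[ℝ] E} {a l : E}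

/-- The function of `ω` whose supremum over `K` is the regularized gap function at `x`. The linear
map `T` plays the role of the matrix `A`. -/
noncomputable def gapObjective (F : E → E) (c : ℝ) (T : E →ₗ[ℝ] E) (x ω : E) : ℝ :=
  ⟪F x, x - ω⟫ - c / 2 * ⟪x - ω, T (x - ω)⟫

lemma gapObjective_sub_sub_eq_inner (hT : T.IsSymmetric) (x y ω ω' : E) :
    (gapObjective F c T y ω' - gapObjective F c T x ω')
      - (gapObjective F c T y ω - gapObjective F c T x ω)
      = ⟪(F y - c • T y) - (F x - c • T x), ω - ω'⟫ := by
  have hswap : ∀ u v, ⟪u, T v⟫ = ⟪T u, v⟫ := fun u v => (hT u v).symm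
  have hcomm : ∀ u v, ⟪T u, v⟫ = ⟪T v, u⟫ := fun u v => by rw [hT, real_inner_comm]
  simp only [gapObjective, map_sub, inner_sub_left, inner_sub_right, real_inner_smul_left, hswap]
  rw [hcomm ω x, hcomm ω y, hcomm ω' x, hcomm ω' y]
  ring

lemma gapObjective_smul_add_smul {s t : ℝ} (hst : s + t = 1) (x ω ω' : E) :
    gapObjective F c T x (s • ω + t • ω')
      = s * gapObjective F c T x ω + t * gapObjective F c T x ω'
        + s * t * (c / 2 * ⟪ω - ω', T (ω - ω')⟫) := by
  obtain rfl := eq_sub_of_add_eq hst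
  simp only [gapObjective, map_sub, map_add, map_smul, inner_sub_left, inner_sub_right,
    inner_add_left, inner_add_right, real_inner_smul_left, real_inner_smul_right]
  ring

lemma strongConcaveOn_gapObjective (hK : Convex ℝ K) (hc : 0 ≤ c)
    (hcoer : ∀ x, m * ‖x‖ ^ 2 ≤ ⟪x, T x⟫) (x : E) :
    StrongConcaveOn K (c * m) (gapObjective F c T x) := by
  refine ⟨hK, fun ω _ ω' _ s t hs ht hst => ?_⟩
  rw [gapObjective_smul_add_smul hst, smul_eq_mul, smul_eq_mul]
  gcongr
  calc c * m / 2 * ‖ω - ω'‖ ^ 2 = c / 2 * (m * ‖ω - ω'‖ ^ 2) := by ring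
    _ ≤ c / 2 * ⟪ω - ω', T (ω - ω')⟫ := by gcongr; exact hcoer _

lemma gapObjective_le_add_norm_sq_div (hK : Convex ℝ K) (hc : 0 < c) (hm : 0 < m)
    (hT : T.IsSymmetric) (hcoer : ∀ x, m * ‖x‖ ^ 2 ≤ ⟪x, T x⟫) (ha : a ∈ K)
    (hmax : IsMaxOn (gapObjective F c T l) K a) (x : E) {ω : E} (hω : ω ∈ K) :
    gapObjective F c T x ω ≤ gapObjective F c T x a
      + ‖(F x - c • T x) - (F l - c • T l)‖ ^ 2 / (2 * (c * m)) := by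
  set p := ‖(F x - c • T x) - (F l - c • T l)‖
  have hgrowth : gapObjective F c T l ω + c * m / 2 * ‖a - ω‖ ^ 2 ≤ gapObjective F c T l a :=
    add_modulus_le_of_isMaxOn_of_uniformConcaveOn
      (strongConcaveOn_gapObjective hK hc.le hcoer l) ha hmax hω
  have hmixed : (gapObjective F c T x ω - gapObjective F c T l ω)
      - (gapObjective F c T x a - gapObjective F c T l a) ≤ p * ‖a - ω‖ :=
    (gapObjective_sub_sub_eq_inner hT l x a ω).trans_le (real_inner_le_norm _ _)
  have hsquare : p * ‖a - ω‖ - c * m / 2 * ‖a - ω‖ ^ 2 ≤ p ^ 2 / (2 * (c * m)) := by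
    rw [le_div_iff₀ (by positivity)]
    linarith [sq_nonneg (p - c * m * ‖a - ω‖)]
  linarith

lemma hasGradientAt_gapObjective_left [CompleteSpace E] (hT : T.IsSymmetric) (a : E)
    (hF : DifferentiableAt ℝ F l) :
    HasGradientAt (fun x => gapObjective F c T x a)
      (F l + ContinuousLinearMap.adjoint (fderiv ℝ F l) (l - a) - c • T (l - a)) l := by
  rw [hasGradientAt_iff_hasFDerivAt]
  have hsub : HasFDerivAt (fun x : E => x - a) (ContinuousLinearMap.id ℝ E) l :=
    (hasFDerivAt_id l).sub_const a
  have hTsub : HasFDerivAt (fun x : E => T (x - a)) (⟨T, hT.continuous⟩ : E →L[ℝ] E) l :=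
    (⟨T, hT.continuous⟩ : E →L[ℝ] E).hasFDerivAt.comp l hsub
  refine ((hF.hasFDerivAt.inner ℝ hsub).sub
    ((hsub.inner ℝ hTsub).const_mul (c / 2))).congr_fderiv ?_
  ext v
  have hquadratic : ⟪l - a, T v⟫ + ⟪v, T (l - a)⟫ = 2 * ⟪T (l - a), v⟫ := by
    rw [← hT, real_inner_comm (T (l - a)) v, two_mul]
  have hadjoint : ⟪ContinuousLinearMap.adjoint (fderiv ℝ F l) (l - a), v⟫
      = ⟪fderiv ℝ F l v, l - a⟫ := by
    rw [ContinuousLinearMap.adjoint_inner_left, real_inner_comm]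
  calc ⟪F l, v⟫ + ⟪fderiv ℝ F l v, l - a⟫ - c / 2 * (⟪l - a, T v⟫ + ⟪v, T (l - a)⟫)
      = ⟪F l, v⟫ + ⟪fderiv ℝ F l v, l - a⟫ - c * ⟪T (l - a), v⟫ := by
        rw [hquadratic]
        ring
    _ = ⟪F l + ContinuousLinearMap.adjoint (fderiv ℝ F l) (l - a) - c • T (l - a), v⟫ := by
        rw [inner_sub_left, inner_add_left, real_inner_smul_left, hadjoint]

end GapObjective

theorem stmt_6_general {E : Type*} [NormedAddCommGroup E] [InnerProductSpace ℝ E]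
    [CompleteSpace E] {K : Set E} (hK : Convex ℝ K) {F : E → E} {c m : ℝ} (hc : 0 < c) (hm : 0 < m)
    {T : E →ₗ[ℝ] E} (hT : T.IsSymmetric) (hcoer : ∀ x, m * ‖x‖ ^ 2 ≤ ⟪x, T x⟫)
    {φ : E → ℝ} (hφ : ∀ x, IsLUB (gapObjective F c T x '' K) (φ x)) {a l : E} (ha : a ∈ K)
    (hmax : IsMaxOn (gapObjective F c T l) K a) (hF : DifferentiableAt ℝ F l) :
    HasGradientAt φ
      (F l + ContinuousLinearMap.adjoint (fderiv ℝ F l) (l - a) - c • T (l - a)) l := by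
  have hlower : ∀ x, gapObjective F c T x a ≤ φ x := fun x => (hφ x).1 ⟨a, ha, rfl⟩
  have hupper : ∀ x, φ x ≤ gapObjective F c T x a
      + ‖(F x - c • T x) - (F l - c • T l)‖ ^ 2 / (2 * (c * m)) := fun x =>
    (hφ x).2 (Set.forall_mem_image.2 fun _ hω =>
      gapObjective_le_add_norm_sq_div hK hc hm hT hcoer ha hmax x hω)
  have hshift : (fun x => (F x - c • T x) - (F l - c • T l)) =O[𝓝 l] fun x => x - l := by
    have hTdiff : DifferentiableAt ℝ T l := (⟨T, hT.continuous⟩ : E →L[ℝ] E).differentiableAt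
    exact (hF.sub (hTdiff.const_smul c)).isBigO_sub
  have herror : (fun x => φ x - gapObjective F c T x a) =O[𝓝 l] fun x => ‖x - l‖ ^ 2 := by
    refine (IsBigO.of_bound (2 * (c * m))⁻¹ (Eventually.of_forall fun x => ?_)).trans
      (hshift.norm_norm.pow 2)
    rw [Real.norm_of_nonneg (sub_nonneg.2 (hlower x)), Real.norm_of_nonneg (by positivity),
      inv_mul_eq_div]
    linarith [hupper x]
  have hsum := (hasGradientAt_gapObjective_left (c := c) hT a hF).hasFDerivAt.add
    (herror.hasFDerivAt one_lt_two)
  rw [hasGradientAt_iff_hasFDerivAt]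
  simpa only [Pi.add_def, add_sub_cancel, add_zero] using hsum

/-- If F is continuously differentiable, then the regularized gap function φ^c is
differentiable at every λ, with gradient ∇φ^c(λ) = F(λ) + (DF(λ)ᵀ − cA)(λ − ω̂(λ)),
where ω̂(λ) ∈ K is the unique maximizer defining φ^c(λ). -/
theorem stmt_6 (n : ℕ) (hn : 1 ≤ n) (K : Set (EuclideanSpace ℝ (Fin n)))
    (hKne : K.Nonempty) (hKcl : IsClosed K) (hKcv : Convex ℝ K)
    (F : EuclideanSpace ℝ (Fin n) → EuclideanSpace ℝ (Fin n)) (hF : ContDiff ℝ 1 F)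
    (c : ℝ) (hc : 0 < c) (A : Matrix (Fin n) (Fin n) ℝ) (hA : A.PosDef)
    (φ : EuclideanSpace ℝ (Fin n) → ℝ)
    (ωhat : EuclideanSpace ℝ (Fin n) → EuclideanSpace ℝ (Fin n))
    (hωhatK : ∀ l, ωhat l ∈ K)
    (hωhatmax : ∀ l, ∀ ω ∈ K,
      ⟪F l, l - ω⟫ - c / 2 * ⟪l - ω, Matrix.toEuclideanLin A (l - ω)⟫ ≤
        ⟪F l, l - ωhat l⟫ -
          c / 2 * ⟪l - ωhat l, Matrix.toEuclideanLin A (l - ωhat l)⟫)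
    (hφ : ∀ l, IsGreatest
      ((fun ω => ⟪F l, l - ω⟫ - c / 2 * ⟪l - ω, Matrix.toEuclideanLin A (l - ω)⟫) '' K)
      (φ l)) :
    ∀ l, HasGradientAt φ
      (F l + ContinuousLinearMap.adjoint (fderiv ℝ F l) (l - ωhat l)
        - c • Matrix.toEuclideanLin A (l - ωhat l)) l := by
  obtain ⟨m, hm, hcoer⟩ := exists_pos_mul_norm_sq_le_inner_toEuclideanLin hA
  exact fun l => stmt_6_general hKcv hc hm (Matrix.isSymmetric_toEuclideanLin_iff.2 hA.isHermitian)
    hcoer (fun x => (hφ x).isLUB) (hωhatK l) (hωhatmax l) (hF.differentiable one_ne_zero l)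
end

section
/- Let F : ℝ^{n_x} × ℝ^{n_u} × ℝ^{n_λ} → ℝ^{n_λ} be continuous and fix (x, u) ∈ ℝ^{n_x} × ℝ^{n_u}. Then λ ∈ K satisfies ⟨F(x, u, λ), ω − λ⟩ ≥ 0 for all ω ∈ K if and only if there exists η ∈ ℝ^{n_λ} such that F(x, u, λ) − η = 0, g(λ) ≥ 0 (componentwise), and φ^c(λ, η) ≤ 0. -/
/-!
Write `Q v` for `(c / 2) * ⟨v, A v⟩`. If `η (ω - l) ≥ 0` for all `ω ∈ K`, each value
`η (l - ω) - Q (l - ω)` defining the regularized gap is a nonpositive term minus a nonnegative one.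
Conversely, if all these values are nonpositive, testing at `l + t • (ω - l) ∈ K` gives
`-t * η (ω - l) ≤ t ^ 2 * Q (ω - l)`; the quadratic term is of second order in `t`, so dividing by
`t` and letting `t → 0` yields `0 ≤ η (ω - l)`.
-/

open Matrix

section RegularizedGap

variable {𝕜 E H : Type*} [Field 𝕜] [LinearOrder 𝕜] [IsStrictOrderedRing 𝕜]
  [AddCommGroup E] [Module 𝕜 E] [AddCommGroup H] [Module 𝕜 H]
  {K : Set E} {l : E} {f : Module.Dual 𝕜 E} {Q : QuadraticForm 𝕜 E}

theorem nonneg_of_forall_nonneg_add_mul {a b : 𝕜}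
    (h : ∀ t : 𝕜, 0 < t → t ≤ 1 → 0 ≤ a + t * b) : 0 ≤ a := by
  by_contra! ha
  obtain ⟨s, hs, hbs⟩ := exists_pos_mul_lt (neg_pos.2 ha) |b|
  have hstep : min 1 s * b ≤ |b| * s := calc
    min 1 s * b ≤ min 1 s * |b| := by gcongr; exact le_abs_self b
    _ ≤ |b| * s := by rw [mul_comm]; gcongr; exact min_le_right 1 s
  linarith [h (min 1 s) (lt_min one_pos hs) (min_le_left 1 s)]

theorem nonneg_map_sub_of_le_quadratic (hK : StarConvex 𝕜 l K)
    (h : ∀ ω ∈ K, f (l - ω) ≤ Q (l - ω)) : ∀ ω ∈ K, 0 ≤ f (ω - l) := by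
  intro ω hω
  refine nonneg_of_forall_nonneg_add_mul (b := Q (ω - l)) fun t ht ht' => ?_
  have hdiff : l - (l + t • (ω - l)) = -(t • (ω - l)) := by abel
  have hval := h _ (hK.add_smul_sub_mem hω ht.le ht')
  rw [hdiff, map_neg, map_smul, QuadraticMap.map_neg, QuadraticMap.map_smul, smul_eq_mul,
    smul_eq_mul] at hval
  exact nonneg_of_mul_nonneg_right (by linarith : 0 ≤ t * (f (ω - l) + t * Q (ω - l))) ht

theorem forall_nonneg_map_sub_iff_le_quadratic (hK : StarConvex 𝕜 l K)
    (hQ : ∀ v, 0 ≤ Q v) :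
    (∀ ω ∈ K, 0 ≤ f (ω - l)) ↔ ∀ ω ∈ K, f (l - ω) ≤ Q (l - ω) := by
  refine ⟨fun h ω hω => ?_, nonneg_map_sub_of_le_quadratic hK⟩
  calc
    f (l - ω) = -f (ω - l) := by rw [← map_neg, neg_sub]
    _ ≤ 0 := neg_nonpos.2 (h ω hω)
    _ ≤ Q (l - ω) := hQ _

theorem stmt_8_general (B : H →ₗ[𝕜] Module.Dual 𝕜 E) (hK : Convex 𝕜 K) (hQ : ∀ v, 0 ≤ Q v)
    (F : E → H) (φ : E → H → 𝕜)
    (hφ : ∀ l η, IsLUB ((fun ω => B η (l - ω) - Q (l - ω)) '' K) (φ l η)) (l : E) :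
    (l ∈ K ∧ ∀ ω ∈ K, 0 ≤ B (F l) (ω - l)) ↔ ∃ η, F l - η = 0 ∧ l ∈ K ∧ φ l η ≤ 0 := by
  have hgap : φ l (F l) ≤ 0 ↔ ∀ ω ∈ K, B (F l) (l - ω) ≤ Q (l - ω) := by
    simp only [isLUB_le_iff (hφ l (F l)), mem_upperBounds, Set.forall_mem_image, sub_nonpos]
  simp only [sub_eq_zero, exists_eq_left', hgap]
  exact and_congr_right fun hl => forall_nonneg_map_sub_iff_le_quadratic (hK hl) hQ

end RegularizedGap

/-- For fixed (x, u), λ ∈ K satisfies ⟨F(x,u,λ), ω − λ⟩ ≥ 0 for all ω ∈ K iff there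
exists η with F(x,u,λ) − η = 0, g(λ) ≥ 0 componentwise, and φ^c(λ, η) ≤ 0. -/
theorem stmt_8 (nx nu nl m : ℕ) (hnl : 1 ≤ nl) (hm : 1 ≤ m)
    (g : (Fin nl → ℝ) → (Fin m → ℝ)) (hg : Continuous g)
    (K : Set (Fin nl → ℝ)) (hKdef : K = {l | ∀ i, 0 ≤ g l i})
    (hKne : K.Nonempty) (hKcl : IsClosed K) (hKcv : Convex ℝ K)
    (c : ℝ) (hc : 0 < c) (A : Matrix (Fin nl) (Fin nl) ℝ) (hA : A.PosDef)
    (F : (Fin nx → ℝ) → (Fin nu → ℝ) → (Fin nl → ℝ) → (Fin nl → ℝ))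
    (hF : Continuous fun p : (Fin nx → ℝ) × (Fin nu → ℝ) × (Fin nl → ℝ) =>
      F p.1 p.2.1 p.2.2)
    (x : Fin nx → ℝ) (u : Fin nu → ℝ)
    (φ : (Fin nl → ℝ) → (Fin nl → ℝ) → ℝ)
    (hφ : ∀ l η, IsGreatest
      ((fun ω => η ⬝ᵥ (l - ω) - c / 2 * ((l - ω) ⬝ᵥ A.mulVec (l - ω))) '' K) (φ l η)) :
    ∀ l, ((l ∈ K ∧ ∀ ω ∈ K, 0 ≤ F x u l ⬝ᵥ (ω - l)) ↔
      (∃ η, F x u l - η = 0 ∧ (∀ i, 0 ≤ g l i) ∧ φ l η ≤ 0)) := by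
  subst hKdef
  have hquad : ∀ v, ((c / 2) • A.toQuadraticForm') v = c / 2 * (v ⬝ᵥ A *ᵥ v) := fun v =>
    congrArg (c / 2 * ·) (Matrix.toLinearMap₂'_apply' A v v)
  exact stmt_8_general (dotProductBilin ℝ ℝ) hKcv (hA.toQuadraticForm'.smul (half_pos hc)).nonneg
    (F x u) φ fun l η => by simpa only [hquad] using! (hφ l η).isLUB
end

section
/- For every s ≥ 0, the relaxed feasible set R^c = {(λ, η) ∈ ℝ² : b_l ≤ λ ≤ b_u and φ^c(λ, η) ≤ s} is a path-connected subset of ℝ². -/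
/-!
For fixed `λ` the regularized gap `φ(λ, ·)` is a supremum of affine functions, hence convex, and at
`η = 0` all of them are nonpositive. So every fibre of the relaxed feasible set over the constraint
set is convex and contains `0`; the zero section is a path-connected subset meeting each fibre.
-/

theorem isPathConnected_setOf_of_isPathConnected_fibers {X Y : Type*} [TopologicalSpace X]
    [TopologicalSpace Y] {K : Set X} (hK : IsPathConnected K) {F : X → Set Y}
    (hF : ∀ x ∈ K, IsPathConnected (F x)) {σ : X → Y} (hσ : ContinuousOn σ K)
    (hσF : ∀ x ∈ K, σ x ∈ F x) :
    IsPathConnected {p : X × Y | p.1 ∈ K ∧ p.2 ∈ F p.1} := by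
  obtain ⟨x₀, hx₀, hx₀K⟩ := hK
  refine ⟨(x₀, σ x₀), ⟨hx₀, hσF x₀ hx₀⟩, ?_⟩
  rintro ⟨x, y⟩ ⟨hx, hy⟩
  have along_section : JoinedIn {p : X × Y | p.1 ∈ K ∧ p.2 ∈ F p.1} (x₀, σ x₀) (x, σ x) :=
    ((hx₀K hx).map_continuousOn (continuousOn_id.prodMk hσ)).mono <|
      Set.image_subset_iff.mpr fun z hz => ⟨hz, hσF z hz⟩
  have along_fiber : JoinedIn {p : X × Y | p.1 ∈ K ∧ p.2 ∈ F p.1} (x, σ x) (x, y) :=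
    (((hF x hx).joinedIn _ (hσF x hx) _ hy).map (Continuous.prodMk_right x)).mono <|
      Set.image_subset_iff.mpr fun _ hz => ⟨hx, hz⟩
  exact along_section.trans along_fiber

theorem convexOn_of_isLUB {𝕜 E β ι : Type*} [Semiring 𝕜] [PartialOrder 𝕜] [AddCommMonoid E]
    [SMul 𝕜 E] [AddCommMonoid β] [PartialOrder β] [IsOrderedAddMonoid β] [SMul 𝕜 β]
    [PosSMulMono 𝕜 β] {C : Set E} (hC : Convex 𝕜 C) {I : Set ι} {f : ι → E → β}
    (hf : ∀ i ∈ I, ConvexOn 𝕜 C (f i)) {g : E → β}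
    (hg : ∀ x ∈ C, IsLUB ((fun i => f i x) '' I) (g x)) : ConvexOn 𝕜 C g := by
  have le_g : ∀ x ∈ C, ∀ i ∈ I, f i x ≤ g x := fun x hx i hi =>
    (hg x hx).1 (Set.mem_image_of_mem _ hi)
  refine ⟨hC, fun x hx y hy a b ha hb hab => ?_⟩
  refine (isLUB_le_iff (hg _ (hC hx hy ha hb hab))).mpr (Set.forall_mem_image.mpr fun i hi => ?_)
  calc f i (a • x + b • y)
      ≤ a • f i x + b • f i y := (hf i hi).2 hx hy ha hb hab
    _ ≤ a • g x + b • g y := by gcongr; exacts [le_g x hx i hi, le_g y hy i hi]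

section RegularizedGap

variable {E : Type*} [NormedAddCommGroup E] [InnerProductSpace ℝ E] {K : Set E} {c : ℝ}
  {φ : E → E → ℝ} {l : E}

/-- `φ l η` is, for `l ∈ K`, the regularized gap function
`sup_{ω ∈ K} (⟪η, l - ω⟫ - (c / 2) ‖l - ω‖²)` of the constraint set `K`. With `IsLUB`
the supremum is finite but need not be attained; the values of `φ` at `l ∉ K` are left free. -/
def IsRegularizedGap (K : Set E) (c : ℝ) (φ : E → E → ℝ) : Prop :=
  ∀ l ∈ K, ∀ η,
    IsLUB ((fun ω => inner ℝ η (l - ω) - c / 2 * ‖l - ω‖ ^ 2) '' K) (φ l η)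

namespace IsRegularizedGap

theorem convexOn (hφ : IsRegularizedGap K c φ) (hl : l ∈ K) :
    ConvexOn ℝ Set.univ (φ l) := by
  refine convexOn_of_isLUB convex_univ (fun ω _ => ?_) fun η _ => hφ l hl η
  have pairing_convex : ConvexOn ℝ Set.univ fun η : E => inner ℝ η (l - ω) :=
    ((innerₗ E).flip (l - ω)).convexOn convex_univ
  exact pairing_convex.add_const (-(c / 2 * ‖l - ω‖ ^ 2))

theorem apply_zero_nonpos (hφ : IsRegularizedGap K c φ) (hc : 0 ≤ c) (hl : l ∈ K) :
    φ l 0 ≤ 0 := by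
  refine (isLUB_le_iff (hφ l hl 0)).mpr (Set.forall_mem_image.mpr fun ω _ => ?_)
  rw [inner_zero_left, zero_sub, neg_nonpos]
  positivity

theorem isPathConnected_sublevel (hφ : IsRegularizedGap K c φ) (hc : 0 ≤ c) (hl : l ∈ K) {s : ℝ}
    (hs : 0 ≤ s) : IsPathConnected {η | φ l η ≤ s} := by
  have sublevel_convex : Convex ℝ {η | φ l η ≤ s} := by
    simpa only [Set.mem_univ, true_and] using (hφ.convexOn hl).convex_le s
  exact sublevel_convex.isPathConnected ⟨0, (hφ.apply_zero_nonpos hc hl).trans hs⟩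

end IsRegularizedGap

theorem stmt_17_general (hK : IsPathConnected K) (hc : 0 ≤ c) (hφ : IsRegularizedGap K c φ)
    {s : ℝ} (hs : 0 ≤ s) : IsPathConnected {p : E × E | p.1 ∈ K ∧ φ p.1 p.2 ≤ s} :=
  isPathConnected_setOf_of_isPathConnected_fibers hK
    (fun _ hl => hφ.isPathConnected_sublevel hc hl hs) continuousOn_const
    fun _ hl => (hφ.apply_zero_nonpos hc hl).trans hs

end RegularizedGap

/-- For every s ≥ 0, the relaxed feasible set
R^c = {(λ, η) : b_l ≤ λ ≤ b_u, φ^c(λ, η) ≤ s} is path-connected. -/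
theorem stmt_17 (bl bu : ℝ) (hb : bl < bu) (c : ℝ) (hc : 0 < c)
    (φ : ℝ → ℝ → ℝ)
    (hφ : ∀ l η, IsGreatest
      ((fun ω => η * (l - ω) - c / 2 * (l - ω) ^ 2) '' Set.Icc bl bu) (φ l η))
    (s : ℝ) (hs : 0 ≤ s) :
    IsPathConnected {p : ℝ × ℝ | (bl ≤ p.1 ∧ p.1 ≤ bu) ∧ φ p.1 p.2 ≤ s} := by
  have gap : IsRegularizedGap (Set.Icc bl bu) c φ := fun l _ η => by
    simpa [mul_comm η] using (hφ l η).isLUB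
  exact stmt_17_general ((convex_Icc bl bu).isPathConnected ⟨bl, le_rfl, hb.le⟩) hc.le gap hs
end

section
/- For every s > 0, the relaxed feasible set R^c = {(λ, η) ∈ ℝ² : b_l ≤ λ ≤ b_u and φ^c(λ, η) ≤ s} has nonempty interior in ℝ²; in particular, for any λ₀ ∈ (b_l, b_u), the point (λ₀, 0) is an interior point of R^c. -/
/-!
Completing the square shows that the regularized gap function is at most `‖η‖² / (2c)`, uniformly
in the primal variable. Hence the relaxed feasible set over `K` contains the open set
`interior K × ball 0 √(2cs)`, to which `(x, 0)` belongs for every `x` in the interior of `K`.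
-/

section RegularizedGap

variable {E : Type*} [SeminormedAddCommGroup E] [InnerProductSpace ℝ E]

/-- The regularized gap function `φ^c(x, η)` of a constraint set `K` in a real inner product space,
the paper's `[b_l, b_u] ⊆ ℝ` being the one-dimensional case. A supremum stands in for the maximum,
so that `K` need not be compact; for `0 < c` and `K` nonempty it is a genuine one. -/
noncomputable def regularizedGap (K : Set E) (c : ℝ) (x η : E) : ℝ :=
  sSup ((fun ω => inner ℝ η (x - ω) - c / 2 * ‖x - ω‖ ^ 2) '' K)

/-- The relaxed feasible set `R^c` at level `s`, a set of pairs (primal variable in `K`,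
multiplier), where `0 < s` relaxes the condition `φ^c(x, η) ≤ 0`. -/
def relaxedFeasibleSet (K : Set E) (c s : ℝ) : Set (E × E) :=
  {p | p.1 ∈ K ∧ regularizedGap K c p.1 p.2 ≤ s}

theorem regularizedGap_real (K : Set ℝ) (c x η : ℝ) :
    regularizedGap K c x η =
      sSup ((fun ω => η * (x - ω) - c / 2 * (x - ω) ^ 2) '' K) := by
  simp only [regularizedGap, Real.inner_apply, Real.norm_eq_abs, sq_abs]

variable {K : Set E} {c s : ℝ}

theorem inner_sub_half_mul_norm_sq_le (hc : 0 < c) (η v : E) :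
    inner ℝ η v - c / 2 * ‖v‖ ^ 2 ≤ ‖η‖ ^ 2 / (2 * c) := by
  have expansion : ‖η - c • v‖ ^ 2 = ‖η‖ ^ 2 - 2 * (c * inner ℝ η v) + (c * ‖v‖) ^ 2 := by
    rw [norm_sub_sq_real, real_inner_smul_right, norm_smul_of_nonneg hc.le]
  calc inner ℝ η v - c / 2 * ‖v‖ ^ 2
      = (‖η‖ ^ 2 - ‖η - c • v‖ ^ 2) / (2 * c) := by rw [expansion]; field_simp; ring
    _ ≤ ‖η‖ ^ 2 / (2 * c) := by gcongr; exact sub_le_self _ (sq_nonneg _)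

theorem regularizedGap_le (hc : 0 < c) (x η : E) :
    regularizedGap K c x η ≤ ‖η‖ ^ 2 / (2 * c) := by
  refine Real.sSup_le ?_ (by positivity)
  rintro _ ⟨ω, -, rfl⟩
  exact inner_sub_half_mul_norm_sq_le hc η (x - ω)

theorem prod_ball_subset_relaxedFeasibleSet (hc : 0 < c) :
    K ×ˢ Metric.ball 0 √(2 * c * s) ⊆ relaxedFeasibleSet K c s := by
  rintro ⟨x, η⟩ ⟨hx, hη⟩
  have norm_sq_lt : ‖η‖ ^ 2 < 2 * c * s :=
    (Real.lt_sqrt (norm_nonneg η)).mp (mem_ball_zero_iff.mp hη)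
  exact ⟨hx, (regularizedGap_le hc x η).trans ((div_le_iff₀' (by positivity)).mpr norm_sq_lt.le)⟩

theorem mk_zero_mem_interior_relaxedFeasibleSet (hc : 0 < c) (hs : 0 < s) {x : E}
    (hx : x ∈ interior K) : (x, (0 : E)) ∈ interior (relaxedFeasibleSet K c s) := by
  refine interior_mono (prod_ball_subset_relaxedFeasibleSet hc) ?_
  rw [interior_prod_eq, Metric.isOpen_ball.interior_eq]
  exact ⟨hx, Metric.mem_ball_self (by positivity)⟩

theorem stmt_18_general (hK : (interior K).Nonempty) (hc : 0 < c) (hs : 0 < s) :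
    (interior (relaxedFeasibleSet K c s)).Nonempty ∧
      ∀ x ∈ interior K, (x, (0 : E)) ∈ interior (relaxedFeasibleSet K c s) :=
  ⟨hK.imp' (·, 0) fun _ => mk_zero_mem_interior_relaxedFeasibleSet hc hs,
    fun _ => mk_zero_mem_interior_relaxedFeasibleSet hc hs⟩

end RegularizedGap

/-- For every s > 0, the relaxed feasible set
R^c = {(λ, η) : b_l ≤ λ ≤ b_u, φ^c(λ, η) ≤ s} has nonempty interior; in particular,
for any λ₀ ∈ (b_l, b_u), the point (λ₀, 0) is an interior point of R^c. -/
theorem stmt_18 (bl bu : ℝ) (hb : bl < bu) (c : ℝ) (hc : 0 < c)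
    (φ : ℝ → ℝ → ℝ)
    (hφ : ∀ l η, IsGreatest
      ((fun ω => η * (l - ω) - c / 2 * (l - ω) ^ 2) '' Set.Icc bl bu) (φ l η))
    (s : ℝ) (hs : 0 < s) :
    (interior {p : ℝ × ℝ | (bl ≤ p.1 ∧ p.1 ≤ bu) ∧ φ p.1 p.2 ≤ s}).Nonempty ∧
    ∀ l₀ : ℝ, l₀ ∈ Set.Ioo bl bu →
      (l₀, (0 : ℝ)) ∈ interior {p : ℝ × ℝ | (bl ≤ p.1 ∧ p.1 ≤ bu) ∧ φ p.1 p.2 ≤ s} := by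
  obtain rfl : φ = regularizedGap (Set.Icc bl bu) c :=
    funext₂ fun l η => (regularizedGap_real _ c l η ▸ (hφ l η).csSup_eq).symm
  have interior_nonempty : (interior (Set.Icc bl bu)).Nonempty := by
    rwa [interior_Icc, Set.nonempty_Ioo]
  rw [← interior_Icc]
  exact stmt_18_general interior_nonempty hc hs
end
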